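/- arXiv:2202.04535 — 2 statements merged into one kernel-verified Lean document; each statement's English description precedes it below -/
import Mathlib

section
/- Let S be an infinite set, let n, m ∈ ℕ, let s ∈ S^m, and let σ : S^{n+1} → S^m be a system of functional equations. Suppose there exists k ∈ ℕ such that for every t ∈ S the system σ(x_1,…,x_n,t) = s has at most k solutions (x_1,…,x_n) ∈ S^n. Then the system σ(x_1,…,x_n,x_{n+1}) = s is partition regular over S if and only if it admits a constant solution, i.e., there exists a ∈ S with σ(a,…,a) = s. -/
/-!
Suppose no solution is constant. Then every solution `a` has an entry different from its last
entry `t`; choose one such entry and draw an arrow from `t` to it. Each `t` emits at most `k`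
arrows, so on average a vertex of a nonempty finite set receives at most `k` arrows from inside the
set, and hence the underlying graph is `2k`-degenerate. Greedy colouring and compactness (de
Bruijn–Erdős) then give a proper colouring with `2k + 1` colours, for which no solution is
monochromatic.
-/

open Set

section Coloring

variable {V : Type*} {G : SimpleGraph V} {n d : ℕ}

theorem colorable_induce_insert {s : Set V} {v : V} (hs : (G.induce s).Colorable n)
    (hv : (G.neighborSet v ∩ s).encard < n) : (G.induce (insert v s)).Colorable n := by
  classical
  obtain ⟨C⟩ := hs
  obtain ⟨b, hb⟩ : ∃ b, b ∉ C '' {w | G.Adj v w} := by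
    by_contra! hall
    refine hv.not_ge ?_
    calc (n : ℕ∞) = (C '' {w | G.Adj v w}).encard := by simp [eq_univ_of_forall hall]
      _ ≤ {w : s | G.Adj v w}.encard := encard_image_le _ _
      _ = (G.neighborSet v ∩ s).encard := by
        rw [← Subtype.val_injective.encard_image, inter_comm, ← Subtype.image_preimage_coe]
        rfl
  have hfree {w : V} (hw : w ∈ s) (hvw : G.Adj v w) : C ⟨w, hw⟩ ≠ b :=
    fun h ↦ hb ⟨⟨w, hw⟩, hvw, h⟩
  refine ⟨.mk (fun w ↦ if hw : (w : V) ∈ s then C ⟨w, hw⟩ else b) fun {x y} hxy ↦ ?_⟩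
  have hxy : G.Adj x y := hxy
  have eq_v {w : ↥(insert v s)} (hw : (w : V) ∉ s) : (w : V) = v := w.2.resolve_right hw
  by_cases hx : (x : V) ∈ s <;> by_cases hy : (y : V) ∈ s <;>
    simp only [hx, hy, dite_true, dite_false]
  · exact C.valid hxy
  · exact hfree hx (by rwa [eq_v hy, G.adj_comm] at hxy)
  · exact (hfree hy (by rwa [eq_v hx] at hxy)).symm
  · exact (G.ne_of_adj hxy ((eq_v hx).trans (eq_v hy).symm)).elim

theorem colorable_of_forall_finset_induce
    (h : ∀ A : Finset V, (G.induce (A : Set V)).Colorable n) : G.Colorable n := by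
  refine SimpleGraph.nonempty_hom_of_forall_finite_subgraph_hom fun H hH ↦ ?_
  let inclusion : H.coe →g G.induce (hH.toFinset : Set V) :=
    ⟨fun v ↦ ⟨v, by simp⟩, fun hvw ↦ hvw.adj_sub⟩
  exact (h hH.toFinset).some.comp inclusion

/-- A graph is `d`-degenerate if every nonempty finite set of vertices contains a vertex with at
most `d` neighbours in the set. The graph itself may be infinite, even of infinite degree. -/
def IsDegenerate (G : SimpleGraph V) (d : ℕ) : Prop :=
  ∀ A : Finset V, A.Nonempty → ∃ v ∈ A, (G.neighborSet v ∩ A).encard ≤ d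

theorem IsDegenerate.colorable (hG : IsDegenerate G d) : G.Colorable (d + 1) := by
  classical
  refine colorable_of_forall_finset_induce fun A ↦ ?_
  induction A using Finset.strongInduction with
  | H A ih =>
    obtain rfl | hA := A.eq_empty_or_nonempty
    · rw [Finset.coe_empty]
      exact .of_isEmpty _
    obtain ⟨v, hvA, hv⟩ := hG A hA
    rw [← Finset.insert_erase hvA, Finset.coe_insert]
    refine colorable_induce_insert (ih _ (Finset.erase_ssubset hvA)) ?_
    calc (G.neighborSet v ∩ (A.erase v : Finset V)).encard
        ≤ (G.neighborSet v ∩ A).encard := by gcongr; exact A.erase_subset v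
      _ ≤ d := hv
      _ < (d + 1 : ℕ) := by exact_mod_cast d.lt_succ_self

end Coloring

section BoundedOutDegree

variable {V : Type*} {r : V → V → Prop} {k : ℕ}

theorem exists_mem_encard_inNeighbors_le {A : Finset V} (hA : A.Nonempty)
    (hr : ∀ x ∈ A, ({y | r x y} ∩ A).encard ≤ k) : ∃ v ∈ A, ({x | r x v} ∩ A).encard ≤ k := by
  classical
  by_contra! hin
  have many_in : ∀ v ∈ A, k < (A.bipartiteBelow r v).card := fun v hv ↦ by
    rw [← Nat.cast_lt (α := ℕ∞), ← encard_coe_eq_coe_finsetCard, Finset.coe_bipartiteBelow]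
    exact (hin v hv).trans_eq (congrArg encard (inter_comm _ _))
  have few_out : ∀ v ∈ A, (A.bipartiteAbove r v).card ≤ k := fun v hv ↦ by
    rw [← Nat.cast_le (α := ℕ∞), ← encard_coe_eq_coe_finsetCard, Finset.coe_bipartiteAbove]
    exact (congrArg encard (inter_comm _ _)).trans_le (hr v hv)
  exact (Finset.card_nsmul_lt_card_nsmul_of_lt_of_le' r hA many_in few_out).false

theorem isDegenerate_fromRel (hr : ∀ x, {y | r x y}.encard ≤ k) :
    IsDegenerate (SimpleGraph.fromRel r) (2 * k) := by
  intro A hA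
  obtain ⟨v, hvA, hv⟩ := exists_mem_encard_inNeighbors_le hA fun x _ ↦
    (encard_le_encard inter_subset_left).trans (hr x)
  refine ⟨v, hvA, ?_⟩
  have hsub : (SimpleGraph.fromRel r).neighborSet v ∩ A ⊆ {y | r v y} ∪ ({x | r x v} ∩ A) := by
    rintro w ⟨⟨-, hvw | hwv⟩, hwA⟩
    exacts [.inl hvw, .inr ⟨hwv, hwA⟩]
  calc ((SimpleGraph.fromRel r).neighborSet v ∩ A).encard
      ≤ {y | r v y}.encard + ({x | r x v} ∩ A).encard :=
        (encard_le_encard hsub).trans (encard_union_le _ _)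
    _ ≤ k + k := add_le_add (hr v) hv
    _ = (2 * k : ℕ) := by push_cast; ring

end BoundedOutDegree

section PartitionRegular

variable {ι S : Type*} {X : Set (ι → S)}

/-- A set `X` of tuples is partition regular if every finite colouring of `S` makes some tuple of
`X` monochromatic. A system `σ(x) = s` is encoded by its solution set `{x | σ x = s}`. -/
def IsPartitionRegular (X : Set (ι → S)) : Prop :=
  ∀ (r : ℕ) (c : S → Fin r), ∃ a : ι → S, (∀ i j, c (a i) = c (a j)) ∧ a ∈ X

theorem exists_coloring_forall_mem_ne {i₀ : ι} {k : ℕ}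
    (hX : ∀ t, {a ∈ X | a i₀ = t}.encard ≤ k) (hconst : ∀ s, Function.const ι s ∉ X) :
    ∃ c : S → Fin (2 * k + 1), ∀ a ∈ X, ∃ i, c (a i₀) ≠ c (a i) := by
  have exists_ne : ∀ a ∈ X, ∃ i, a i₀ ≠ a i := fun a ha ↦ by
    by_contra! heq
    exact hconst (a i₀) (funext heq ▸ ha)
  have : Nonempty ι := ⟨i₀⟩
  choose! j hj using exists_ne
  let arrow (x y : S) : Prop := ∃ a ∈ {a ∈ X | a i₀ = x}, a (j a) = y
  have out_le (x : S) : {y | arrow x y}.encard ≤ k := (encard_image_le _ _).trans (hX x)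
  obtain ⟨C⟩ := (isDegenerate_fromRel out_le).colorable
  exact ⟨C, fun a ha ↦ ⟨j a, C.valid ⟨hj a ha, .inl ⟨a, ⟨ha, rfl⟩, rfl⟩⟩⟩⟩

theorem stmt_1_general (i₀ : ι) (hX : ∃ k : ℕ, ∀ t, {a ∈ X | a i₀ = t}.encard ≤ k) :
    IsPartitionRegular X ↔ ∃ s, Function.const ι s ∈ X := by
  refine ⟨fun hreg ↦ ?_, fun ⟨s, hs⟩ _ _ ↦ ⟨Function.const ι s, fun _ _ ↦ rfl, hs⟩⟩
  by_contra! hconst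
  obtain ⟨k, hk⟩ := hX
  obtain ⟨c, hc⟩ := exists_coloring_forall_mem_ne hk hconst
  obtain ⟨a, hmono, ha⟩ := hreg _ c
  obtain ⟨i, hi⟩ := hc a ha
  exact hi (hmono i₀ i)

theorem encard_last_eq_le {n : ℕ} (X : Set (Fin (n + 1) → S)) (t : S) :
    {a ∈ X | a (Fin.last n) = t}.encard ≤
      {x : Fin n → S | (Fin.snoc x t : Fin (n + 1) → S) ∈ X}.encard := by
  refine (encard_le_encard ?_).trans (encard_image_le (fun x ↦ Fin.snoc x t) _)
  rintro a ⟨ha, rfl⟩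
  have hsnoc : Fin.snoc (Fin.init a) (a (Fin.last n)) = a := Fin.snoc_init_self a
  exact ⟨Fin.init a, by rwa [mem_ofPred_eq, hsnoc], hsnoc⟩

end PartitionRegular

/-- A system `σ(x₁,…,xₙ,x_{n+1}) = s` whose solutions in the first `n` variables are
uniformly bounded in number (for each fixed value of the last variable) is partition
regular over `S` if and only if it admits a constant solution. -/
theorem stmt_1 {S : Type*} [Infinite S] (n m : ℕ) (s : Fin m → S)
    (σ : (Fin (n + 1) → S) → Fin m → S)
    (hbound : ∃ k : ℕ, ∀ t : S,
      {x : Fin n → S | σ (Fin.snoc x t) = s}.Finite ∧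
      {x : Fin n → S | σ (Fin.snoc x t) = s}.ncard ≤ k) :
    (∀ (r : ℕ) (c : S → Fin r), ∃ a : Fin (n + 1) → S,
        (∀ i j, c (a i) = c (a j)) ∧ σ a = s) ↔
      ∃ a : S, σ (fun _ => a) = s := by
  obtain ⟨k, hk⟩ := hbound
  exact stmt_1_general (X := {a | σ a = s}) (Fin.last n) ⟨k, fun t ↦
    (encard_last_eq_le _ t).trans (encard_le_coe_iff_finite_ncard_le.2 (hk t))⟩
end

section
/- Let P_1,…,P_m ∈ ℤ[x,y] be polynomials in two variables each of degree at least 1. The following are equivalent: (1) the system P_1(x,y) = 0, …, P_m(x,y) = 0 is infinitely partition regular over the positive integers; (2) the polynomial x − y divides P_i in ℤ[x,y] for every i ∈ {1,…,m}. -/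
open MvPolynomial

/-!
Substituting `y = x` shows that `x - y` divides a polynomial exactly when it vanishes identically
on the diagonal; in that case every pair `(a, a)` is a monochromatic solution.

If `x - y` does not divide `F`, only finitely many zeros of `F` lie on the diagonal. Join two
distinct points by an edge when they form a zero of `F` in one of the two orders. For all but
finitely many `a` the polynomials `F(a, y)` and `F(x, a)` are nonzero of bounded degree, so all but
finitely many vertices have bounded degree. Coloring those greedily along a well-order, and giving
each exceptional vertex a color of its own, leaves no monochromatic zero off the diagonal.
-/

open Filter Polynomial.Bivariate
open scoped Polynomial

section GraphColoring

variable {V : Type*} {G : SimpleGraph V} {k : ℕ}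

theorem exists_forall_mem_ne_of_encard_le {β : Type*} {s : Set β} (hs : s.encard ≤ k)
    (f : β → Fin (k + 1)) : ∃ i, ∀ b ∈ s, f b ≠ i := by
  have image_ne_univ : f '' s ≠ Set.univ := fun h => by
    have card_le : ((k + 1 : ℕ) : ℕ∞) ≤ k := by
      simpa [h, Set.encard_univ] using (Set.encard_image_le f s).trans hs
    exact absurd (Nat.cast_le.mp card_le) (Nat.not_succ_le_self k)
  obtain ⟨i, hi⟩ := (Set.ne_univ_iff_exists_notMem _).mp image_ne_univ
  exact ⟨i, fun b hb hbi => hi ⟨b, hb, hbi⟩⟩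

theorem colorable_of_encard_adj_lt_le [LinearOrder V] [WellFoundedLT V]
    (h : ∀ v, {w | w < v ∧ G.Adj v w}.encard ≤ k) : G.Colorable (k + 1) := by
  have encard_le (v : V) : {w : Set.Iio v | G.Adj v w}.encard ≤ k := by
    rw [← Subtype.val_injective.encard_image]
    refine (Set.encard_le_encard ?_).trans (h v)
    rintro _ ⟨w, hvw, rfl⟩
    exact ⟨w.2, hvw⟩
  choose freshColor freshColor_ne using fun v => exists_forall_mem_ne_of_encard_le (encard_le v)
  let color : V → Fin (k + 1) :=
    wellFounded_lt.fix fun v colorBelow => freshColor v fun w => colorBelow w w.2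
  have color_ne {v w : V} (hwv : w < v) (hvw : G.Adj v w) : color w ≠ color v := by
    rw [show color v = freshColor v fun w => color w from wellFounded_lt.fix_eq _ v]
    exact freshColor_ne v (fun w => color w) ⟨w, hwv⟩ hvw
  refine ⟨.mk color fun {v w} hvw => ?_⟩
  rcases lt_or_gt_of_ne hvw.ne with hlt | hlt
  · exact color_ne hlt hvw.symm
  · exact (color_ne hlt hvw).symm

theorem colorable_of_encard_neighborSet_le (h : ∀ v, (G.neighborSet v).encard ≤ k) :
    G.Colorable (k + 1) := by
  obtain ⟨_, _⟩ := exists_wellFoundedLT V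
  exact colorable_of_encard_adj_lt_le fun v =>
    (Set.encard_le_encard fun _ hw => hw.2).trans (h v)

theorem colorable_ncard_add_of_colorable_induce_compl {s : Set V} (hs : s.Finite)
    (h : (G.induce sᶜ).Colorable k) : G.Colorable (s.ncard + k) := by
  classical
  obtain ⟨C⟩ := h
  have := hs.fintype
  let color (v : V) : s ⊕ Fin k := if hv : v ∈ s then .inl ⟨v, hv⟩ else .inr (C ⟨v, hv⟩)
  have card_colors : Fintype.card (s ⊕ Fin k) = s.ncard + k := by
    rw [Fintype.card_sum, Fintype.card_fin, ← Set.toFinset_card, Set.ncard_eq_toFinset_card']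
  rw [← card_colors]
  refine SimpleGraph.Coloring.colorable (.mk color fun {v w} hvw => ?_)
  by_cases hv : v ∈ s <;> by_cases hw : w ∈ s
  · simpa [color, hv, hw] using hvw.ne
  · simp [color, hv, hw]
  · simp [color, hv, hw]
  · simpa [color, hv, hw] using C.valid (v := ⟨v, hv⟩) (w := ⟨w, hw⟩) hvw

theorem exists_colorable_of_eventually_encard_neighborSet_le
    (h : ∀ᶠ v in cofinite, (G.neighborSet v).encard ≤ k) : ∃ n, G.Colorable n := by
  refine ⟨_, colorable_ncard_add_of_colorable_induce_compl (eventually_cofinite.mp h)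
    (colorable_of_encard_neighborSet_le (k := k) fun v => ?_)⟩
  calc ((G.induce _).neighborSet v).encard
      = (Subtype.val '' (G.induce _).neighborSet v).encard :=
        (Subtype.val_injective.encard_image _).symm
    _ ≤ (G.neighborSet v).encard := Set.encard_le_encard (Set.image_subset_iff.mpr fun _ hw => hw)
    _ ≤ k := not_not.mp v.2

end GraphColoring

section BivariatePolynomial

variable {R : Type*} [CommRing R]

theorem eval_eval_X_eq_evalEval (F : R[X][Y]) (a : R) :
    (F.eval Polynomial.X).eval a = F.evalEval a a := by
  rw [← Polynomial.coe_evalRingHom, Polynomial.eval, Polynomial.hom_eval₂, RingHom.comp_id,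
    Polynomial.coe_evalRingHom, Polynomial.eval_X, Polynomial.eval₂_evalRingHom]

theorem evalEval_swap (F : R[X][Y]) (x y : R) :
    (swap F).evalEval x y = F.evalEval y x := by
  simpa only [Polynomial.coe_aevalAeval_eq_evalEval] using aevalAeval_swap x y F

theorem eval_eq_evalEval_equivMvPolynomial_symm (P : MvPolynomial (Fin 2) R) (x y : R) :
    eval ![x, y] P = ((equivMvPolynomial R).symm P).evalEval x y := by
  induction P using MvPolynomial.induction_on with
  | C a => simp
  | add p q hp hq => simp [hp, hq]
  | mul_X p i hp => fin_cases i <;> simp [hp, Polynomial.evalEval_C]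

theorem X_sub_X_dvd_iff_eval_equivMvPolynomial_symm {P : MvPolynomial (Fin 2) R} :
    X 0 - X 1 ∣ P ↔ ((equivMvPolynomial R).symm P).eval Polynomial.X = 0 := by
  rw [← map_dvd_iff (equivMvPolynomial R).symm, ← neg_dvd, map_sub, neg_sub,
    equivMvPolynomial_symm_X_0, equivMvPolynomial_symm_X_1, Polynomial.dvd_iff_isRoot,
    Polynomial.IsRoot.def]

variable [IsDomain R]

theorem encard_setOf_evalEval_eq_zero_le {F : R[X][Y]} {x : R} (hx : F.leadingCoeff.eval x ≠ 0) :
    {y | F.evalEval x y = 0}.encard ≤ F.natDegree := by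
  classical
  let Fx := F.map (Polynomial.evalRingHom x)
  have hFx : Fx ≠ 0 := fun h => hx <| by
    simpa [Fx, Polynomial.coeff_map] using congrArg (Polynomial.coeff · F.natDegree) h
  calc {y | F.evalEval x y = 0}.encard
      ≤ (Fx.roots.toFinset : Set R).encard := by
        refine Set.encard_le_encard fun y hy => ?_
        rw [Finset.mem_coe, Multiset.mem_toFinset, Polynomial.mem_roots hFx, Polynomial.IsRoot.def,
          Polynomial.map_evalRingHom_eval]
        exact hy
    _ = Fx.roots.toFinset.card := Set.encard_coe_eq_coe_finsetCard _
    _ ≤ F.natDegree := by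
        exact_mod_cast (Multiset.toFinset_card_le _).trans F.card_roots_map_le_natDegree

theorem eventually_encard_setOf_evalEval_eq_zero_le {F : R[X][Y]} (hF : F ≠ 0) :
    ∀ᶠ x in cofinite, {y | F.evalEval x y = 0}.encard ≤ F.natDegree :=
  (Polynomial.finite_setOfPred_isRoot
    (Polynomial.leadingCoeff_ne_zero.mpr hF)).eventually_cofinite_notMem.mono
      fun _ => encard_setOf_evalEval_eq_zero_le

theorem exists_coloring_forall_evalEval_eq_zero {α : Type*} {u : α → R}
    (hu : Function.Injective u) {F : R[X][Y]} (hF : F ≠ 0) :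
    ∃ (r : ℕ) (c : α → Fin r), ∀ a b, c a = c b → F.evalEval (u a) (u b) = 0 → a = b := by
  let G : SimpleGraph α := .fromRel fun a b => F.evalEval (u a) (u b) = 0
  let F' := swap F
  have hF' : F' ≠ 0 := by simpa [F'] using hF
  have encard_neighborSet_le : ∀ᶠ a in cofinite,
      (G.neighborSet a).encard ≤ (F.natDegree + F'.natDegree : ℕ) := by
    filter_upwards [hu.tendsto_cofinite.eventually (eventually_encard_setOf_evalEval_eq_zero_le hF),
      hu.tendsto_cofinite.eventually (eventually_encard_setOf_evalEval_eq_zero_le hF')] with a h h'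
    calc (G.neighborSet a).encard
        = (u '' G.neighborSet a).encard := (hu.encard_image _).symm
      _ ≤ ({y | F.evalEval (u a) y = 0} ∪ {y | F'.evalEval (u a) y = 0}).encard := by
          refine Set.encard_le_encard ?_
          rintro _ ⟨b, ⟨-, hab | hba⟩, rfl⟩
          · exact .inl hab
          · exact .inr ((evalEval_swap F _ _).trans hba)
      _ ≤ _ := Set.encard_union_le _ _
      _ ≤ (F.natDegree + F'.natDegree : ℕ) := by push_cast; gcongr
  obtain ⟨r, ⟨C⟩⟩ := exists_colorable_of_eventually_encard_neighborSet_le encard_neighborSet_le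
  refine ⟨r, C, fun a b hab h => by_contra fun hne => ?_⟩
  exact C.valid (v := a) (w := b) ⟨hne, .inl h⟩ hab

theorem exists_coloring_finite_setOf_evalEval_eq_zero {α : Type*} {u : α → R}
    (hu : Function.Injective u) {F : R[X][Y]} (hF : F.eval Polynomial.X ≠ 0) :
    ∃ (r : ℕ) (c : α → Fin r),
      {p : α × α | c p.1 = c p.2 ∧ F.evalEval (u p.1) (u p.2) = 0}.Finite := by
  have finite_diagonal_zeros : {a | F.evalEval (u a) (u a) = 0}.Finite := by
    simp_rw [← eval_eval_X_eq_evalEval]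
    exact (Polynomial.finite_setOfPred_isRoot hF).preimage hu.injOn
  have hF0 : F ≠ 0 := by
    rintro rfl
    exact hF Polynomial.eval_zero
  obtain ⟨r, c, hc⟩ := exists_coloring_forall_evalEval_eq_zero hu hF0
  refine ⟨r, c, (finite_diagonal_zeros.image fun a => (a, a)).subset ?_⟩
  rintro ⟨a, b⟩ ⟨hab, hzero⟩
  obtain rfl := hc a b hab hzero
  exact ⟨a, hzero, rfl⟩

end BivariatePolynomial

theorem stmt_6_general {R : Type*} [CommRing R] [IsDomain R] {α ι : Type*} {u : α → R}
    (hu : Function.Injective u) {S : Set α} (hS : S.Infinite) (P : ι → MvPolynomial (Fin 2) R) :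
    (∀ (r : ℕ) (c : α → Fin r),
        {p : α × α | p.1 ∈ S ∧ p.2 ∈ S ∧ c p.1 = c p.2 ∧
          ∀ i, eval ![u p.1, u p.2] (P i) = 0}.Infinite) ↔
      ∀ i, (X 0 - X 1 : MvPolynomial (Fin 2) R) ∣ P i := by
  constructor
  · intro h i
    by_contra hdvd
    rw [X_sub_X_dvd_iff_eval_equivMvPolynomial_symm] at hdvd
    obtain ⟨r, c, hfinite⟩ := exists_coloring_finite_setOf_evalEval_eq_zero hu hdvd
    refine h r c (hfinite.subset ?_)
    rintro p ⟨-, -, hcolor, hzero⟩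
    exact ⟨hcolor, (eval_eq_evalEval_equivMvPolynomial_symm _ _ _).symm.trans (hzero i)⟩
  · intro h r c
    have diagonal_injective : Function.Injective fun a : α => (a, a) :=
      fun _ _ hab => congrArg Prod.fst hab
    refine (hS.image diagonal_injective.injOn).mono ?_
    rintro _ ⟨a, ha, rfl⟩
    refine ⟨ha, ha, rfl, fun i => ?_⟩
    obtain ⟨Q, hQ⟩ := h i
    simp [hQ]

/-- A system of polynomial equations `P₁(x,y) = 0, …, P_m(x,y) = 0` with `Pᵢ ∈ ℤ[x,y]`
nonconstant is infinitely partition regular over the positive integers if and only if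
`x - y` divides every `Pᵢ` in `ℤ[x,y]`. -/
theorem stmt_6 (m : ℕ) (P : Fin m → MvPolynomial (Fin 2) ℤ)
    (hdeg : ∀ i, 1 ≤ (P i).totalDegree) :
    (∀ (r : ℕ) (c : ℕ → Fin r),
        {p : ℕ × ℕ | 0 < p.1 ∧ 0 < p.2 ∧ c p.1 = c p.2 ∧
          ∀ i, eval ![(p.1 : ℤ), (p.2 : ℤ)] (P i) = 0}.Infinite) ↔
      ∀ i, (X 0 - X 1 : MvPolynomial (Fin 2) ℤ) ∣ P i :=
  stmt_6_general Nat.cast_injective (Set.Ioi_infinite 0) P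
end
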